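/- For all non-negative integers n and k with n ≥ k, one has A_B(n,k) = Σ_{r=0}^{k} (−1)^{k−r} · 2^r · r! · S_B(n,r) · C(n−r, k−r), where C(a,b) denotes the binomial coefficient. -/

import Mathlib

open Classical Finset

/-! ### Signed permutations (type B), window notation -/

/-- `w` is the window notation of a signed permutation of `{1,…,n}`. -/
def IsSignedPerm {n : ℕ} (w : Fin n → ℤ) : Prop :=
  (∀ i, 1 ≤ |w i| ∧ |w i| ≤ (n : ℤ)) ∧ Function.Injective fun i => |w i|

/-- The value `β(i)` for `1 ≤ i ≤ n`, and `0` otherwise (so `β(0) = 0`). -/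
def bVal {n : ℕ} (w : Fin n → ℤ) (i : ℕ) : ℤ :=
  if h : 1 ≤ i ∧ i ≤ n then w ⟨i - 1, by omega⟩ else 0

/-- Type `B` descent number: `#{i ∈ {0,…,n−1} : β(i) > β(i+1)}`, with `β(0) = 0`. -/
noncomputable def desB {n : ℕ} (w : Fin n → ℤ) : ℕ :=
  ((Finset.range n).filter fun i => bVal w (i + 1) < bVal w i).card

/-- Type `B` Eulerian number `A_B(n,k)`. -/
noncomputable def EulB (n k : ℕ) : ℕ :=
  Nat.card { w : Fin n → ℤ // IsSignedPerm w ∧ desB w = k }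

/-- Type `D` descent number: as in type `B` but with the convention `γ(0) = −γ(2)`. -/
noncomputable def desD {n : ℕ} (w : Fin n → ℤ) : ℕ :=
  ((Finset.range n).filter fun i =>
    bVal w (i + 1) < (if i = 0 then -(bVal w 2) else bVal w i)).card

/-- `w` has an even number of negative entries. -/
def IsEvenSigned {n : ℕ} (w : Fin n → ℤ) : Prop :=
  Even ((Finset.univ.filter fun i => w i < 0)).card

/-- Type `D` Eulerian number `A_D(n,k)`. -/
noncomputable def EulD (n k : ℕ) : ℕ :=
  Nat.card { w : Fin n → ℤ // IsSignedPerm w ∧ IsEvenSigned w ∧ desD w = k }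

/-! ### Set partitions of types B and D -/

/-- The negative `−C` of a block `C`. -/
def negSet (C : Finset ℤ) : Finset ℤ := C.image fun x => -x

/-- A `Bₙ`-partition: a set partition of `{−n,…,−1,1,…,n}` such that at most one block
satisfies `C = −C` (the zero-block), and `−C` is a block whenever `C` is. -/
structure BPartition (n : ℕ) where
  blocks : Finset (Finset ℤ)
  cover : ∀ x : ℤ, (x ≠ 0 ∧ |x| ≤ (n : ℤ)) ↔ ∃ C ∈ blocks, x ∈ C
  nonempty : ∀ C ∈ blocks, C.Nonempty
  disj : ∀ C ∈ blocks, ∀ C' ∈ blocks, C ≠ C' → Disjoint C C'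
  closed : ∀ C ∈ blocks, negSet C ∈ blocks
  zeroUnique : ∀ C ∈ blocks, ∀ C' ∈ blocks, negSet C = C → negSet C' = C' → C = C'

/-- A `Dₙ`-partition: a `Bₙ`-partition whose zero-block, if present, has at least
two positive elements. -/
def IsDPartition {n : ℕ} (P : BPartition n) : Prop :=
  ∀ C ∈ P.blocks, negSet C = C → 2 ≤ (C.filter fun x => 0 < x).card

/-- `P` has exactly `r` pairs `{C, −C}` of nonzero blocks. -/
def hasPairs {n : ℕ} (P : BPartition n) (r : ℕ) : Prop :=
  (P.blocks.filter fun C => negSet C ≠ C).card = 2 * r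

/-- Stirling number of the second kind of type `B`. -/
noncomputable def SB (n r : ℕ) : ℕ :=
  Nat.card { P : BPartition n // hasPairs P r }

/-- Stirling number of the second kind of type `D`. -/
noncomputable def SD (n r : ℕ) : ℕ :=
  Nat.card { P : BPartition n // IsDPartition P ∧ hasPairs P r }

/-- An ordered `Bₙ`-partition: a `Bₙ`-partition with a linear order on its blocks in
which the zero-block (if present) comes first and `C, −C` are always adjacent. -/
structure OrderedBPartition (n : ℕ) where
  P : BPartition n
  order : List (Finset ℤ)
  nodup : order.Nodup
  same : order.toFinset = P.blocks
  zeroFirst : ∀ C ∈ P.blocks, negSet C = C → order[0]? = some C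
  adjacent : ∀ C ∈ P.blocks, negSet C ≠ C →
    ∃ i : ℕ, (order[i]? = some C ∧ order[i+1]? = some (negSet C)) ∨
             (order[i]? = some (negSet C) ∧ order[i+1]? = some C)

/-! ### Classical Stirling and Eulerian numbers -/

/-- The classical Stirling number of the second kind `S(n,r)`. -/
noncomputable def Stir (n r : ℕ) : ℕ :=
  Nat.card { P : Finpartition (Finset.univ : Finset (Fin n)) // P.parts.card = r }

/-- Number of descents of a permutation of `{1,…,n}`. -/
noncomputable def desA {n : ℕ} (σ : Equiv.Perm (Fin n)) : ℕ :=
  ((Finset.range (n - 1)).filter fun i =>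
    ∃ h : i + 1 < n, σ ⟨i + 1, h⟩ < σ ⟨i, Nat.lt_of_succ_lt h⟩).card

/-- The classical Eulerian number `A(n,k)`: permutations with `k−1` descents
(and `A(n,0) = 0`). -/
noncomputable def EulA (n k : ℕ) : ℕ :=
  if k = 0 then 0 else Nat.card { σ : Equiv.Perm (Fin n) // desA σ = k - 1 }

/-! ### Colored permutations -/

/-- `π` is (the window notation of) a colored permutation in `G_{m,n}`. -/
def IsColoredPerm {m n : ℕ} (π : Fin n → Fin n × ZMod m) : Prop :=
  Function.Bijective fun i => (π i).1

/-- The color order `a ≺ b` on the colored alphabet. -/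
def colorLt {m n : ℕ} (a b : Fin n × ZMod m) : Prop :=
  b.2.val < a.2.val ∨ (a.2 = b.2 ∧ a.1 < b.1)

/-- The descent number `des_G` of a colored permutation. -/
noncomputable def desG {m n : ℕ} (π : Fin n → Fin n × ZMod m) : ℕ :=
  ((Finset.range (n - 1)).filter fun i =>
    ∃ h : i + 1 < n, colorLt (π ⟨i + 1, h⟩) (π ⟨i, Nat.lt_of_succ_lt h⟩)).card
  + (if h : 0 < n then (if (π ⟨0, h⟩).2 ≠ 0 then 1 else 0) else 0)

/-- The Eulerian number `A_m(n,k)` of `G_{m,n}`. -/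
noncomputable def EulG (m n k : ℕ) : ℕ :=
  Nat.card { π : Fin n → Fin n × ZMod m // IsColoredPerm π ∧ desG π = k }

/-- The shift `C^{[t]}` of a block of the colored alphabet. -/
def shiftBlock {m n : ℕ} (t : ZMod m) (C : Finset (Fin n × ZMod m)) :
    Finset (Fin n × ZMod m) :=
  C.image fun p => (p.1, p.2 + t)

/-- A `G_{m,n}`-partition. -/
structure GPartition (m n : ℕ) where
  blocks : Finset (Finset (Fin n × ZMod m))
  cover : ∀ x : Fin n × ZMod m, ∃ C ∈ blocks, x ∈ C
  nonempty : ∀ C ∈ blocks, C.Nonempty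
  disj : ∀ C ∈ blocks, ∀ C' ∈ blocks, C ≠ C' → Disjoint C C'
  closed : ∀ C ∈ blocks, shiftBlock 1 C ∈ blocks
  zeroUnique : ∀ C ∈ blocks, ∀ C' ∈ blocks,
    shiftBlock 1 C = C → shiftBlock 1 C' = C' → C = C'

/-- The number of equivalence classes (orbits under shifting) of nonzero blocks. -/
noncomputable def numClasses {m n : ℕ} (P : GPartition m n) : ℕ :=
  ((P.blocks.filter fun C => shiftBlock 1 C ≠ C).image
    fun C => (Finset.range m).image fun t => shiftBlock (t : ZMod m) C).card

/-- Stirling number of the second kind `S_m(n,r)` for `G_{m,n}`. -/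
noncomputable def SG (m n r : ℕ) : ℕ :=
  Nat.card { P : GPartition m n // numClasses P = r }

/-- An ordered `G_{m,n}`-partition. -/
structure OrderedGPartition (m n : ℕ) where
  P : GPartition m n
  order : List (Finset (Fin n × ZMod m))
  nodup : order.Nodup
  same : order.toFinset = P.blocks
  zeroFirst : ∀ C ∈ P.blocks, shiftBlock 1 C = C → order[0]? = some C
  consec : ∀ C ∈ P.blocks, shiftBlock 1 C ≠ C →
    ∃ i : ℕ, ∃ s : ZMod m, ∀ t : ℕ, t < m →
      order[i + t]? = some (shiftBlock (s + (t : ZMod m)) C)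


/-! ### Algebra -/

/-- The coefficient appearing in the identity. -/
def coefB (n k r : ℕ) : ℤ := if r ≤ k then (-1 : ℤ) ^ (k - r) * (Nat.choose (n - r) (k - r) : ℤ) else 0

lemma coefB_rec (n k r : ℕ) (hr : r ≤ n) :
    (2 * r + 1) * coefB (n + 1) (k + 1) r + (2 * r + 2) * coefB (n + 1) (k + 1) (r + 1)
      = (2 * k + 3) * coefB n (k + 1) r + (2 * n - 2 * k + 1) * coefB n k r := by
  obtain ⟨N, rfl⟩ := Nat.exists_eq_add_of_le hr
  unfold coefB
  rcases lt_trichotomy r (k + 1) with h | h | h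
  · obtain ⟨j, rfl⟩ := Nat.exists_eq_add_of_le (Nat.lt_succ_iff.mp h)
    have e1 : r + N + 1 - r = N + 1 := by omega
    have e2 : r + j + 1 - r = j + 1 := by omega
    have e3 : r + N + 1 - (r + 1) = N := by omega
    have e4 : r + j + 1 - (r + 1) = j := by omega
    have e5 : r + N - r = N := by omega
    have e6 : r + j - r = j := by omega
    rw [if_pos (by omega), if_pos (by omega), if_pos (by omega), if_pos (by omega), e1, e2, e3, e4, e5, e6,
      Nat.choose_succ_succ]
    have key : (Nat.choose N (j + 1) : ℤ) * (j + 1) = Nat.choose N j * (N - j) := by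
      have := Nat.choose_succ_right_eq N j
      rcases le_or_gt j N with hj | hj
      · zify [hj] at this
        exact this
      · simp [Nat.choose_eq_zero_of_lt hj, Nat.choose_eq_zero_of_lt (Nat.lt_succ_of_lt hj)]
    push_cast
    rw [pow_succ]
    linear_combination (2 * (-1 : ℤ) ^ j) * key
  · subst h
    have e1 : k + 1 - (k + 1) = 0 := by omega
    simp
    ring
  · rw [if_neg (by omega), if_neg (by omega), if_neg (by omega), if_neg (by omega)]
    ring

lemma coefB_zero (n r : ℕ) : coefB n 0 r = if r = 0 then 1 else 0 := by
  unfold coefB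
  by_cases h : r = 0 <;> simp [h]

theorem algB (A c : ℕ → ℕ → ℤ)
    (c00 : c 0 0 = 1) (cz : ∀ n r, n < r → c n r = 0)
    (c0 : ∀ n, c (n + 1) 0 = c n 0)
    (c1 : ∀ n r, c (n + 1) (r + 1) = (2 * r + 3) * c n (r + 1) + (2 * r + 2) * c n r)
    (A0 : ∀ k, A 0 k = if k = 0 then 1 else 0)
    (A1 : ∀ n, A (n + 1) 0 = A n 0)
    (A2 : ∀ n k, A (n + 1) (k + 1) = (2 * k + 3) * A n (k + 1) + (2 * n - 2 * k + 1) * A n k)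
    (n : ℕ) : ∀ k, A n k = ∑ r ∈ Finset.range (n + 1), c n r * coefB n k r := by
  induction n with
  | zero =>
    intro k
    simp only [A0, zero_add, Finset.sum_range_one, c00, coefB]
    rcases k with _ | k <;> simp
  | succ n ih =>
    have cz0 : ∀ n, A n 0 = c n 0 := by
      intro n
      induction n with
      | zero => rw [A0, c00]; simp
      | succ n ih => rw [A1, c0, ih]
    intro k
    rcases k with _ | k
    · simp [coefB_zero, cz0]
    · rw [A2, ih, ih, Finset.sum_range_succ' _ (n + 1), c0]
      simp only [c1]
      have h1 : ∑ r ∈ Finset.range (n + 1), ((2 * (r : ℤ) + 3) * c n (r + 1) + (2 * r + 2) * c n r) *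
            coefB (n + 1) (k + 1) (r + 1) + c n 0 * coefB (n + 1) (k + 1) 0
          = ∑ r ∈ Finset.range (n + 1), (2 * (r : ℤ) + 1) * c n r * coefB (n + 1) (k + 1) r
            + ∑ r ∈ Finset.range (n + 1), (2 * (r : ℤ) + 2) * c n r * coefB (n + 1) (k + 1) (r + 1) := by
        have h2 := Finset.sum_range_succ (fun r : ℕ => (2 * (r : ℤ) + 1) * c n r * coefB (n + 1) (k + 1) r) (n + 1)
        rw [Finset.sum_range_succ', cz n (n + 1) (by omega)] at h2
        simp only [mul_zero, zero_mul, add_zero] at h2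
        rw [← h2]
        simp only [add_mul, Finset.sum_add_distrib]
        push_cast
        simp only [add_mul, mul_add, Finset.sum_add_distrib]
        ring_nf
        simp only [Finset.sum_mul, mul_assoc]
        have h3 : ∀ x : ℕ, c n (1 + x) * (coefB (1 + n) (1 + k) (1 + x) * 3) =
          c n (1 + x) * (coefB (1 + n) (1 + k) (1 + x)) + c n (1 + x) * (coefB (1 + n) (1 + k) (1 + x) * 2) := by
          intro x; ring
        simp only [h3, Finset.sum_add_distrib]
        ring
      rw [h1, Finset.mul_sum, Finset.mul_sum, ← Finset.sum_add_distrib, ← Finset.sum_add_distrib]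
      apply Finset.sum_congr rfl
      intro r hr
      have := coefB_rec n k r (by simp at hr; omega)
      linear_combination (-c n r) * this

/-! ### Signed permutations -/

lemma bVal_zero {n : ℕ} (w : Fin n → ℤ) : bVal w 0 = 0 := by simp [bVal]

lemma bVal_ins_le {n : ℕ} (w : Fin n → ℤ) (p : Fin (n + 1)) (v : ℤ) (i : ℕ) (h : i ≤ p) :
    bVal (p.insertNth v w : Fin (n + 1) → ℤ) i = bVal w i := by
  unfold bVal
  have hp := p.2
  by_cases h0 : 1 ≤ i
  · rw [dif_pos (by omega), dif_pos (by omega)]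
    have : (⟨i - 1, by omega⟩ : Fin (n + 1)) = p.succAbove ⟨i - 1, by omega⟩ := by
      rw [Fin.succAbove_of_castSucc_lt]
      · rfl
      · simp only [Fin.lt_def, Fin.val_castSucc]; omega
    rw [this, Fin.insertNth_apply_succAbove]
  · rw [dif_neg (by omega), dif_neg (by omega)]

lemma bVal_ins_eq {n : ℕ} (w : Fin n → ℤ) (p : Fin (n + 1)) (v : ℤ) :
    bVal (p.insertNth v w : Fin (n + 1) → ℤ) (p + 1) = v := by
  unfold bVal
  have hp := p.2
  rw [dif_pos (by omega)]
  simp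

lemma bVal_ins_gt {n : ℕ} (w : Fin n → ℤ) (p : Fin (n + 1)) (v : ℤ) (i : ℕ) (h : p < i) :
    bVal (p.insertNth v w : Fin (n + 1) → ℤ) (i + 1) = bVal w i := by
  unfold bVal
  have hp := p.2
  by_cases h0 : i ≤ n
  · rw [dif_pos (by omega), dif_pos (by omega)]
    have : (⟨i + 1 - 1, by omega⟩ : Fin (n + 1)) = p.succAbove ⟨i - 1, by omega⟩ := by
      rw [Fin.succAbove_of_le_castSucc]
      · ext; simp; omega
      · simp only [Fin.le_def, Fin.val_castSucc]; omega
    rw [this, Fin.insertNth_apply_succAbove]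
  · rw [dif_neg (by omega), dif_neg (by omega)]

lemma bVal_bd {n : ℕ} {w : Fin n → ℤ} (hw : IsSignedPerm w) (i : ℕ) : |bVal w i| ≤ n := by
  unfold bVal
  split_ifs with h
  · exact (hw.1 _).2
  · simp

/-- Descent indicator. -/
noncomputable def dInd {n : ℕ} (w : Fin n → ℤ) (i : ℕ) : ℕ := if bVal w (i + 1) < bVal w i then 1 else 0

lemma desB_eq {n : ℕ} (w : Fin n → ℤ) : desB w = ∑ i ∈ Finset.range n, dInd w i := by
  unfold desB dInd
  rw [Finset.card_filter]

lemma desB_ins_lt {n : ℕ} {w : Fin n → ℤ} (hw : IsSignedPerm w) (p : Fin (n + 1)) (hp : (p : ℕ) < n)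
    (v : ℤ) (hv : v = n + 1 ∨ v = -(n + 1)) :
    desB (p.insertNth v w : Fin (n + 1) → ℤ) + dInd w p = desB w + 1 := by
  obtain ⟨m, hm⟩ := Nat.exists_eq_add_of_lt hp
  have h1 : desB (p.insertNth v w : Fin (n + 1) → ℤ) =
      ∑ i ∈ Finset.range (p + (m + 1 + 1)), dInd (p.insertNth v w : Fin (n + 1) → ℤ) i := by
    rw [desB_eq]; congr 2; omega
  have h2 : desB w = ∑ i ∈ Finset.range (p + (m + 1)), dInd w i := by
    rw [desB_eq]; congr 2
  rw [h1, h2, Finset.sum_range_add, Finset.sum_range_add _ _ (m + 1), Finset.sum_range_succ' _ (m + 1),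
    Finset.sum_range_succ' _ m, Finset.sum_range_succ' _ m]
  have e1 : ∑ i ∈ Finset.range p, dInd (p.insertNth v w : Fin (n + 1) → ℤ) i = ∑ i ∈ Finset.range p, dInd w i := by
    apply Finset.sum_congr rfl
    intro i hi
    rw [Finset.mem_range] at hi
    unfold dInd
    rw [bVal_ins_le _ _ _ _ (by omega), bVal_ins_le _ _ _ _ (by omega)]
  have e2 : ∑ i ∈ Finset.range m, dInd (p.insertNth v w : Fin (n + 1) → ℤ) (p + (i + 1 + 1))
      = ∑ i ∈ Finset.range m, dInd w (p + (i + 1)) := by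
    apply Finset.sum_congr rfl
    intro i hi
    unfold dInd
    rw [bVal_ins_gt _ _ _ _ (by omega), show (p : ℕ) + (i + 1 + 1) = (p + (i + 1)) + 1 by omega,
      bVal_ins_gt _ _ _ _ (by omega)]
  have e3 : dInd (p.insertNth v w : Fin (n + 1) → ℤ) (p + (0 + 1)) + dInd (p.insertNth v w : Fin (n + 1) → ℤ) (p + 0) = 1 := by
    unfold dInd
    rw [bVal_ins_gt _ _ _ _ (by omega), add_zero, zero_add, bVal_ins_eq, bVal_ins_le _ _ _ _ le_rfl]
    have b1 := abs_le.mp (bVal_bd hw (p + 1))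
    have b2 := abs_le.mp (bVal_bd hw p)
    split_ifs <;> omega
  rw [e1, e2]
  simp only [add_zero] at *
  omega

lemma desB_ins_last {n : ℕ} {w : Fin n → ℤ} (hw : IsSignedPerm w) (p : Fin (n + 1)) (hp : (p : ℕ) = n)
    (v : ℤ) (hv : v = n + 1 ∨ v = -(n + 1)) :
    desB (p.insertNth v w : Fin (n + 1) → ℤ) = desB w + if v < 0 then 1 else 0 := by
  rw [desB_eq, desB_eq, Finset.sum_range_succ]
  congr 1
  · apply Finset.sum_congr rfl
    intro i hi
    rw [Finset.mem_range] at hi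
    unfold dInd
    rw [bVal_ins_le _ _ _ _ (by omega), bVal_ins_le _ _ _ _ (by omega)]
  · unfold dInd
    have h := bVal_ins_eq w p v
    rw [hp] at h
    rw [h, bVal_ins_le _ _ _ _ (by omega)]
    have b2 := abs_le.mp (bVal_bd hw n)
    split_ifs <;> omega

/-- Insertion data. -/
noncomputable def insB (n : ℕ) (x : (Fin n → ℤ) × Fin (n + 1) × ℤ) : Fin (n + 1) → ℤ :=
  x.2.1.insertNth x.2.2 x.1

/-- The finset of signed permutations. -/
noncomputable def permsF : (n : ℕ) → Finset (Fin n → ℤ)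
  | 0 => Finset.univ
  | n + 1 => ((permsF n) ×ˢ (Finset.univ : Finset (Fin (n + 1))) ×ˢ ({(n : ℤ) + 1, -((n : ℤ) + 1)} : Finset ℤ)).image
      (insB n)

lemma isSignedPerm_ins {n : ℕ} {w : Fin n → ℤ} (hw : IsSignedPerm w) (p : Fin (n + 1))
    (v : ℤ) (hv : v = n + 1 ∨ v = -(n + 1)) : IsSignedPerm (p.insertNth v w : Fin (n + 1) → ℤ) := by
  have hv' : |v| = n + 1 := by
    rcases hv with rfl | rfl
    · exact abs_of_nonneg (by omega)
    · rw [abs_neg]; exact abs_of_nonneg (by omega)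
  constructor
  · intro i
    rcases Fin.eq_self_or_eq_succAbove p i with rfl | ⟨j, rfl⟩
    · rw [Fin.insertNth_apply_same, hv']; push_cast; omega
    · rw [Fin.insertNth_apply_succAbove]
      have := hw.1 j
      push_cast; omega
  · intro i i' h
    rcases Fin.eq_self_or_eq_succAbove p i with hi | ⟨j, rfl⟩ <;>
    rcases Fin.eq_self_or_eq_succAbove p i' with h' | ⟨j', rfl⟩
    · exact hi.trans h'.symm
    · subst hi
      simp only [Fin.insertNth_apply_same, Fin.insertNth_apply_succAbove] at h
      have := hw.1 j'
      omega
    · subst h'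
      simp only [Fin.insertNth_apply_same, Fin.insertNth_apply_succAbove] at h
      have := hw.1 j
      omega
    · simp only [Fin.insertNth_apply_succAbove] at h
      rw [hw.2 h]

lemma exists_max {n : ℕ} {w : Fin (n + 1) → ℤ} (hw : IsSignedPerm w) : ∃ p, |w p| = n + 1 := by
  by_contra! hne
  have hc := Finset.card_le_card_of_injOn (s := Finset.univ) (t := Finset.Icc (1 : ℤ) n) (fun i => |w i|)
    (by
      intro i _
      have := hw.1 i
      have := hne i
      simp only [Finset.coe_Icc, Set.mem_Icc]
      push_cast at *
      omega) (hw.2.injOn)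
  simp at hc

lemma mem_permsF {n : ℕ} (w : Fin n → ℤ) : w ∈ permsF n ↔ IsSignedPerm w := by
  induction n with
  | zero =>
    simp only [permsF, Finset.mem_univ, true_iff]
    exact ⟨fun i => i.elim0, fun i => i.elim0⟩
  | succ n ih =>
    simp only [permsF, Finset.mem_image, Finset.mem_product, Finset.mem_univ, true_and, Prod.exists,
      Finset.mem_insert, Finset.mem_singleton, insB]
    constructor
    · rintro ⟨w, p, v, ⟨hw, hv⟩, rfl⟩
      exact isSignedPerm_ins ((ih w).1 hw) p v hv
    · intro hw
      obtain ⟨p, hp⟩ := exists_max hw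
      refine ⟨p.removeNth w, p, w p, ⟨(ih _).2 ⟨fun i => ?_, fun i j hij => ?_⟩, ?_⟩, by simp⟩
      · have h1 := hw.1 (p.succAbove i)
        have h2 : |w (p.succAbove i)| ≠ |w p| := fun h => Fin.succAbove_ne p i (hw.2 h)
        simp only [Fin.removeNth]
        push_cast at h1
        omega
      · exact Fin.succAbove_right_injective (hw.2 hij)
      · rcases abs_choice (w p) with h | h <;> omega

lemma insB_inj {n : ℕ} : Set.InjOn (insB n)
    (((permsF n) ×ˢ (Finset.univ : Finset (Fin (n + 1))) ×ˢ
      ({(n : ℤ) + 1, -((n : ℤ) + 1)} : Finset ℤ) : Finset _) : Set ((Fin n → ℤ) × Fin (n + 1) × ℤ)) := by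
  rintro ⟨w, p, v⟩ h ⟨w', p', v'⟩ h' heq
  simp only [Finset.coe_product, Set.mem_prod, Finset.mem_coe, mem_permsF, Finset.mem_univ, true_and,
    Finset.mem_insert, Finset.mem_singleton] at h h'
  simp only [insB] at heq
  have hpp : p = p' := by
    have hs := isSignedPerm_ins h.1 p v h.2
    apply hs.2
    simp only [Fin.insertNth_apply_same]
    rw [heq, Fin.insertNth_apply_same]
    rcases h.2 with h | h <;> rcases h'.2 with h' | h' <;> simp only [h, h', abs_neg]
  subst hpp
  have hv : v = v' := by
    have := congrFun heq p
    simpa using this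
  subst hv
  have hw : w = w' := by
    funext i
    have := congrFun heq (p.succAbove i)
    simpa using this
  rw [hw]

lemma desB_le {n : ℕ} (w : Fin n → ℤ) : desB w ≤ n := by
  unfold desB
  exact (Finset.card_filter_le _ _).trans (by simp)

lemma sum_ins {n : ℕ} {w : Fin n → ℤ} (hw : IsSignedPerm w) (F : ℕ → ℤ) :
    ∑ p : Fin (n + 1), ∑ v ∈ ({(n : ℤ) + 1, -((n : ℤ) + 1)} : Finset ℤ), F (desB (insB n (w, p, v)))
      = (2 * desB w + 1) * F (desB w) + (2 * n - 2 * desB w + 1) * F (desB w + 1) := by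
  have hne : (n : ℤ) + 1 ≠ -((n : ℤ) + 1) := by omega
  simp only [Finset.sum_pair hne, insB]
  rw [Fin.sum_univ_castSucc]
  rw [desB_ins_last hw _ (by simp) _ (Or.inl rfl), desB_ins_last hw _ (by simp) _ (Or.inr rfl)]
  rw [if_neg (by omega), if_pos (by omega)]
  have h1 : ∀ (p : Fin n) (v : ℤ), (v = n + 1 ∨ v = -(n + 1)) →
      F (desB (Fin.insertNth p.castSucc v w : Fin (n + 1) → ℤ)) =
        (dInd w p : ℤ) * F (desB w) + (1 - dInd w p) * F (desB w + 1) := by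
    intro p v hv
    have := desB_ins_lt hw p.castSucc (by simp) v hv
    simp only [Fin.val_castSucc] at this
    have hd : dInd w p = 0 ∨ dInd w p = 1 := by unfold dInd; split_ifs <;> simp
    rcases hd with hd | hd
    · rw [hd] at this ⊢
      rw [show desB (Fin.insertNth p.castSucc v w : Fin (n + 1) → ℤ) = desB w + 1 by omega]; simp
    · rw [hd] at this ⊢
      rw [show desB (Fin.insertNth p.castSucc v w : Fin (n + 1) → ℤ) = desB w by omega]; simp
  rw [Finset.sum_congr rfl (fun p _ => by rw [h1 p _ (Or.inl rfl), h1 p _ (Or.inr rfl)])]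
  have h2 : (desB w : ℤ) = ∑ p : Fin n, (dInd w p : ℤ) := by
    rw [desB_eq, ← Fin.sum_univ_eq_sum_range]; push_cast; rfl
  have h3 : ∑ p : Fin n, (1 - (dInd w p : ℤ)) = n - desB w := by
    rw [h2, Finset.sum_sub_distrib]; simp
  simp only [Finset.sum_add_distrib, ← Finset.sum_mul]
  rw [h3, ← h2]
  ring

lemma sum_permsF (n : ℕ) (F : ℕ → ℤ) :
    ∑ w ∈ permsF (n + 1), F (desB w) =
      ∑ w ∈ permsF n, ((2 * desB w + 1) * F (desB w) + (2 * n - 2 * desB w + 1) * F (desB w + 1)) := by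
  rw [permsF, Finset.sum_image insB_inj, Finset.sum_product]
  apply Finset.sum_congr rfl
  intro w hw
  rw [Finset.sum_product, sum_ins ((mem_permsF w).1 hw)]

lemma EulB_eq (n k : ℕ) : (EulB n k : ℤ) = ∑ w ∈ permsF n, if desB w = k then 1 else 0 := by
  rw [Finset.sum_boole]
  unfold EulB
  rw [Nat.subtype_card ((permsF n).filter fun w => desB w = k)]
  intro w; simp [mem_permsF]

lemma EulB_base (k : ℕ) : (EulB 0 k : ℤ) = if k = 0 then 1 else 0 := by
  rw [EulB_eq]
  have : ∀ w : Fin 0 → ℤ, desB w = 0 := fun w => by simpa using desB_le w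
  simp [permsF, this, eq_comm]

lemma EulB_zero (n : ℕ) : (EulB (n + 1) 0 : ℤ) = EulB n 0 := by
  rw [EulB_eq, EulB_eq, sum_permsF n (fun d => if d = 0 then 1 else 0)]
  apply Finset.sum_congr rfl
  intro w _
  by_cases h : desB w = 0 <;> simp [h]

lemma EulB_succ (n k : ℕ) : (EulB (n + 1) (k + 1) : ℤ) =
    (2 * k + 3) * EulB n (k + 1) + (2 * n - 2 * k + 1) * EulB n k := by
  rw [EulB_eq, EulB_eq, EulB_eq, sum_permsF n (fun d => if d = k + 1 then 1 else 0), Finset.mul_sum,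
    Finset.mul_sum, ← Finset.sum_add_distrib]
  apply Finset.sum_congr rfl
  intro w _
  by_cases h : desB w = k + 1
  · simp [h]; ring
  · by_cases h' : desB w = k <;> simp [h, h']

/-! ### Codes for type `B` partitions -/

/-- The canonical-representative function of a `Bₙ`-partition. -/
def IsCode (n : ℕ) (e : ℤ → ℤ) : Prop :=
  (∀ x, e (-x) = -e x) ∧ (∀ x, (n : ℤ) < |x| → e x = 0) ∧ (∀ x, e (e x) = e x) ∧ ∀ x, |e x| ≤ |x|

/-- Fixed points of a code (including `0`). -/
noncomputable def fixC (n : ℕ) (e : ℤ → ℤ) : Finset ℤ := (Finset.Icc (-(n : ℤ)) n).filter fun v => e v = v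

lemma mem_fixC {n : ℕ} {e : ℤ → ℤ} {v : ℤ} : v ∈ fixC n e ↔ (-(n : ℤ) ≤ v ∧ v ≤ n) ∧ e v = v := by
  simp only [fixC, Finset.mem_filter, Finset.mem_Icc]

/-- Extend a code by the value at `n+1`. -/
noncomputable def extC (n : ℕ) (e : ℤ → ℤ) (v : ℤ) : ℤ → ℤ := fun x =>
  if x = n + 1 then v else if x = -(n + 1) then -v else e x

/-- All codes. -/
noncomputable def codesF : ℕ → Finset (ℤ → ℤ)
  | 0 => {fun _ => 0}
  | n + 1 => (codesF n).biUnion fun e => (insert ((n : ℤ) + 1) (fixC n e)).image (extC n e)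

lemma isCode_ext {n : ℕ} {e : ℤ → ℤ} (he : IsCode n e) {v : ℤ} (hv : v ∈ insert ((n : ℤ) + 1) (fixC n e)) :
    IsCode (n + 1) (extC n e v) := by
  obtain ⟨h1, h2, h3, h4⟩ := he
  simp only [fixC, Finset.mem_insert, Finset.mem_filter, Finset.mem_Icc] at hv
  have ebd : ∀ x, |e x| ≤ n := by
    intro x
    by_cases h : (n : ℤ) < |x|
    · rw [h2 x h]; simp
    · exact (h4 x).trans (by omega)
  have hv2 : |v| ≤ n + 1 := by rw [abs_le]; omega
  refine ⟨fun x => ?_, fun x hx => ?_, fun x => ?_, fun x => ?_⟩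
  · unfold extC
    have := h1 x
    split_ifs <;> omega
  · unfold extC
    push_cast at hx
    rw [if_neg, if_neg, h2 x (by omega)]
    · rintro rfl
      rw [abs_neg, abs_of_nonneg (by omega)] at hx
      omega
    · rintro rfl
      rw [abs_of_nonneg (by omega)] at hx
      omega
  · have hfix : extC n e v v = v := by
      unfold extC
      split_ifs <;> omega
    have hfix' : extC n e v (-v) = -v := by
      unfold extC
      have := h1 v
      split_ifs <;> omega
    by_cases c1 : x = n + 1
    · have : extC n e v x = v := by simp [extC, c1]
      rw [this, hfix]
    · by_cases c2 : x = -(n + 1)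
      · have : extC n e v x = -v := by unfold extC; rw [if_neg c1, if_pos c2]
        rw [this, hfix']
      · have : extC n e v x = e x := by unfold extC; rw [if_neg c1, if_neg c2]
        rw [this]
        have b := abs_le.mp (ebd x)
        unfold extC
        rw [if_neg (by omega), if_neg (by omega), h3]
  · unfold extC
    split_ifs with c1 c2
    · rw [c1, abs_of_nonneg (a := (n : ℤ) + 1) (by omega)]; exact hv2
    · rw [c2, abs_neg, abs_neg, abs_of_nonneg (a := (n : ℤ) + 1) (by omega)]; exact hv2
    · exact h4 x

lemma mem_codesF (n : ℕ) (e : ℤ → ℤ) : e ∈ codesF n ↔ IsCode n e := by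
  induction n generalizing e with
  | zero =>
    simp only [codesF, Finset.mem_singleton]
    constructor
    · rintro rfl
      simp [IsCode]
    · rintro ⟨h1, h2, h3, h4⟩
      funext x
      by_cases hx : x = 0
      · subst hx; have := h1 0; simp at this; omega
      · exact h2 x (by simpa using hx)
  | succ n ih =>
    simp only [codesF, Finset.mem_biUnion, Finset.mem_image]
    constructor
    · rintro ⟨e, he, v, hv, rfl⟩
      exact isCode_ext ((ih e).1 he) hv
    · rintro ⟨h1, h2, h3, h4⟩
      have h0 : e 0 = 0 := by have := h1 0; simp at this; omega
      refine ⟨fun x => if |x| ≤ n then e x else 0, (ih _).2 ⟨fun x => ?_, fun x hx => ?_, fun x => ?_, fun x => ?_⟩,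
        e (n + 1), ?_, ?_⟩
      · simp only [abs_neg, h1]; split_ifs <;> simp
      · simp only; rw [if_neg (by omega)]
      · by_cases hx : |x| ≤ n
        · have : |e x| ≤ n := (h4 x).trans hx
          simp only [hx, if_true, this, h3]
        · simp [hx, h0]
      · by_cases hx : |x| ≤ n
        · simp only [hx, if_true, h4]
        · simp [hx]
      · simp only [fixC, Finset.mem_insert, Finset.mem_filter, Finset.mem_Icc]
        have b := h4 (n + 1)
        rw [abs_of_nonneg (a := (n : ℤ) + 1) (by omega)] at b
        have b' := abs_le.mp b
        have a1 := h3 (n + 1)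
        have a2 := h1 (n + 1)
        by_cases c1 : e (n + 1) = n + 1
        · left; exact c1
        by_cases c2 : e (n + 1) = -(n + 1)
        · rw [c2] at a1; omega
        right
        refine ⟨by omega, ?_⟩
        rw [if_pos (abs_le.mpr (by omega)), a1]
      · funext x
        unfold extC
        split_ifs with c1 c2
        · rw [c1]
        · rw [c2, h1]
        · by_cases c3 : |x| ≤ n
          · simp only [c3, if_true]
          simp only [c3, if_false]
          symm; apply h2
          push_cast
          rcases abs_cases x with h | h <;> omega

lemma fixC_ext_self {n : ℕ} {e : ℤ → ℤ} :
    (fixC (n + 1) (extC n e (n + 1))).card = (fixC n e).card + 2 := by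
  have : fixC (n + 1) (extC n e (n + 1)) = insert ((n : ℤ) + 1) (insert (-((n : ℤ) + 1)) (fixC n e)) := by
    ext x
    simp only [mem_fixC, Finset.mem_insert]
    unfold extC
    push_cast
    split_ifs <;> omega
  rw [this, Finset.card_insert_of_notMem, Finset.card_insert_of_notMem]
  · simp only [fixC, Finset.mem_filter, Finset.mem_Icc]; omega
  · simp only [fixC, Finset.mem_insert, Finset.mem_filter, Finset.mem_Icc]; omega

lemma fixC_ext {n : ℕ} {e : ℤ → ℤ} {v : ℤ} (hv : v ∈ fixC n e) :
    fixC (n + 1) (extC n e v) = fixC n e := by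
  ext x
  simp only [fixC, Finset.mem_filter, Finset.mem_Icc] at hv
  rw [mem_fixC, mem_fixC]
  unfold extC
  push_cast
  split_ifs <;> omega

lemma extC_inj {n : ℕ} {e e' : ℤ → ℤ} (he : IsCode n e) (he' : IsCode n e') {v v' : ℤ}
    (h : extC n e v = extC n e' v') : e = e' ∧ v = v' := by
  constructor
  · funext x
    by_cases hx : (n : ℤ) < |x|
    · rw [he.2.1 x hx, he'.2.1 x hx]
    · have := abs_le.mp (not_lt.mp hx)
      have h2 := congrFun h x
      unfold extC at h2
      rwa [if_neg (by omega), if_neg (by omega), if_neg (by omega), if_neg (by omega)] at h2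
  · have h2 := congrFun h (n + 1)
    simpa [extC] using h2

lemma sum_codesF (n : ℕ) (F : ℕ → ℤ) :
    ∑ e ∈ codesF (n + 1), F (fixC (n + 1) e).card =
      ∑ e ∈ codesF n, ((fixC n e).card * F (fixC n e).card + F ((fixC n e).card + 2)) := by
  rw [codesF, Finset.sum_biUnion]
  · apply Finset.sum_congr rfl
    intro e he
    rw [mem_codesF] at he
    rw [Finset.sum_image (fun a _ b _ h => (extC_inj he he h).2), Finset.sum_insert, fixC_ext_self,
      Finset.sum_congr rfl (fun v hv => by rw [fixC_ext hv])]
    · simp; ring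
    · simp only [fixC, Finset.mem_filter, Finset.mem_Icc]; omega
  · intro e he e' he' hne
    simp only [Finset.mem_coe, mem_codesF] at he he'
    simp only [Function.onFun]
    rw [Finset.disjoint_left]
    intro f hf hf'
    rw [Finset.mem_image] at hf hf'
    obtain ⟨v, _, rfl⟩ := hf
    obtain ⟨v', _, h⟩ := hf'
    exact hne (extC_inj he he' h.symm).1

/-- Number of codes with `2r+1` fixed points. -/
noncomputable def NC (n r : ℕ) : ℤ := ∑ e ∈ codesF n, if (fixC n e).card = 2 * r + 1 then 1 else 0

lemma NC_base (r : ℕ) : NC 0 r = if r = 0 then 1 else 0 := by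
  have : (fixC 0 fun _ => 0) = {0} := by
    ext x; simp [fixC]; omega
  unfold NC
  rw [codesF, Finset.sum_singleton, this]
  simp [eq_comm]

lemma NC_zero (n : ℕ) : NC (n + 1) 0 = NC n 0 := by
  unfold NC
  rw [sum_codesF n (fun d => if d = 2 * 0 + 1 then 1 else 0)]
  apply Finset.sum_congr rfl
  intro e _
  by_cases h : (fixC n e).card = 1 <;> simp [h]

lemma NC_succ (n r : ℕ) : NC (n + 1) (r + 1) = (2 * r + 3) * NC n (r + 1) + NC n r := by
  unfold NC
  rw [sum_codesF n (fun d => if d = 2 * (r + 1) + 1 then 1 else 0), Finset.mul_sum, ← Finset.sum_add_distrib]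
  apply Finset.sum_congr rfl
  intro e _
  congr 1
  · by_cases h : (fixC n e).card = 2 * (r + 1) + 1
    · simp [h]; ring
    · simp [h]
  · congr 1
    apply propext; omega

lemma NC_gt (n r : ℕ) (h : n < r) : NC n r = 0 := by
  induction n generalizing r with
  | zero => rw [NC_base, if_neg (by omega)]
  | succ n ih =>
    obtain ⟨s, rfl⟩ : ∃ s, r = s + 1 := ⟨r - 1, by omega⟩
    rw [NC_succ, ih _ (by omega), ih _ (by omega)]; simp

/-! ### Codes versus partitions -/

/-- Ground set. -/
noncomputable def gndB (n : ℕ) : Finset ℤ := (Finset.Icc (-(n : ℤ)) n).erase 0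

lemma mem_gndB {n : ℕ} {x : ℤ} : x ∈ gndB n ↔ x ≠ 0 ∧ |x| ≤ n := by
  simp [gndB, abs_le]

/-- The fiber of `x`. -/
noncomputable def fibB (n : ℕ) (e : ℤ → ℤ) (x : ℤ) : Finset ℤ := (gndB n).filter fun y => e y = e x

lemma mem_fibB {n : ℕ} {e : ℤ → ℤ} {x y : ℤ} : y ∈ fibB n e x ↔ (y ≠ 0 ∧ |y| ≤ n) ∧ e y = e x := by
  rw [fibB, Finset.mem_filter, mem_gndB]

lemma mem_negSet {C : Finset ℤ} {x : ℤ} : x ∈ negSet C ↔ -x ∈ C := by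
  unfold negSet
  rw [Finset.mem_image]
  constructor
  · rintro ⟨y, hy, rfl⟩; simpa using hy
  · intro h; exact ⟨-x, h, by simp⟩

lemma negSet_fibB {n : ℕ} {e : ℤ → ℤ} (he : IsCode n e) (x : ℤ) : negSet (fibB n e x) = fibB n e (-x) := by
  ext y
  rw [mem_negSet, mem_fibB, mem_fibB, he.1, he.1, abs_neg]
  constructor <;> rintro ⟨⟨a, b⟩, c⟩ <;> exact ⟨⟨by omega, b⟩, by omega⟩

lemma fibB_congr {n : ℕ} {e : ℤ → ℤ} {x y : ℤ} (hx : x ∈ gndB n) :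
    fibB n e x = fibB n e y ↔ e x = e y := by
  constructor
  · intro h
    have : x ∈ fibB n e x := mem_fibB.2 ⟨mem_gndB.1 hx, rfl⟩
    rw [h, mem_fibB] at this
    exact this.2
  · intro h
    unfold fibB; rw [h]

lemma negSet_fibB_self {n : ℕ} {e : ℤ → ℤ} (he : IsCode n e) {x : ℤ} (hx : x ∈ gndB n) :
    negSet (fibB n e x) = fibB n e x ↔ e x = 0 := by
  rw [negSet_fibB he, eq_comm, fibB_congr hx, he.1]; omega

/-- The partition of a code. -/
noncomputable def partB (n : ℕ) (e : ℤ → ℤ) (he : IsCode n e) : BPartition n where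
  blocks := (gndB n).image (fibB n e)
  cover := by
    intro x
    rw [← mem_gndB]
    constructor
    · intro hx
      exact ⟨_, Finset.mem_image_of_mem _ hx, mem_fibB.2 ⟨mem_gndB.1 hx, rfl⟩⟩
    · rintro ⟨C, hC, hx⟩
      rw [Finset.mem_image] at hC
      obtain ⟨y, _, rfl⟩ := hC
      exact (Finset.mem_filter.1 hx).1
  nonempty := by
    intro C hC
    rw [Finset.mem_image] at hC
    obtain ⟨y, hy, rfl⟩ := hC
    exact ⟨y, mem_fibB.2 ⟨mem_gndB.1 hy, rfl⟩⟩
  disj := by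
    intro C hC C' hC' hne
    rw [Finset.mem_image] at hC hC'
    obtain ⟨y, hy, rfl⟩ := hC
    obtain ⟨z, hz, rfl⟩ := hC'
    rw [Finset.disjoint_left]
    intro x hx hx'
    rw [mem_fibB] at hx hx'
    exact hne ((fibB_congr hy).2 (hx.2.symm.trans hx'.2))
  closed := by
    intro C hC
    rw [Finset.mem_image] at hC ⊢
    obtain ⟨y, hy, rfl⟩ := hC
    refine ⟨-y, ?_, (negSet_fibB he y).symm⟩
    rw [mem_gndB, abs_neg] at *
    exact ⟨by omega, hy.2⟩
  zeroUnique := by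
    intro C hC C' hC' h h'
    rw [Finset.mem_image] at hC hC'
    obtain ⟨y, hy, rfl⟩ := hC
    obtain ⟨z, hz, rfl⟩ := hC'
    rw [negSet_fibB_self he hy] at h
    rw [negSet_fibB_self he hz] at h'
    rw [fibB_congr hy, h, h']

lemma code_mem {n : ℕ} {e : ℤ → ℤ} (he : IsCode n e) {x : ℤ} (hx : e x ≠ 0) : e x ∈ gndB n ∧ x ∈ gndB n := by
  have h : |x| ≤ n := by
    by_contra h
    exact hx (he.2.1 x (by omega))
  refine ⟨mem_gndB.2 ⟨hx, (he.2.2.2 x).trans h⟩, mem_gndB.2 ⟨?_, h⟩⟩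
  rintro rfl
  have := he.1 0
  simp at this; omega

lemma partB_pairs {n : ℕ} {e : ℤ → ℤ} (he : IsCode n e) (r : ℕ) :
    hasPairs (partB n e he) r ↔ (fixC n e).card = 2 * r + 1 := by
  unfold hasPairs
  have h0 : e 0 = 0 := by have := he.1 0; simp at this; omega
  have h1 : (partB n e he).blocks.filter (fun C => negSet C ≠ C) = ((fixC n e).erase 0).image (fibB n e) := by
    ext C
    simp only [partB, Finset.mem_filter, Finset.mem_image, Finset.mem_erase]
    constructor
    · rintro ⟨⟨x, hx, rfl⟩, hC⟩
      rw [ne_eq, negSet_fibB_self he hx] at hC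
      have hm := (code_mem he hC).1
      refine ⟨e x, ⟨hC, ?_⟩, ?_⟩
      · simp only [fixC, Finset.mem_filter, Finset.mem_Icc]
        exact ⟨abs_le.1 (mem_gndB.1 hm).2, he.2.2.1 x⟩
      · rw [fibB_congr hm, he.2.2.1]
    · rintro ⟨v, ⟨hv, hv'⟩, rfl⟩
      simp only [fixC, Finset.mem_filter, Finset.mem_Icc] at hv'
      have hm : v ∈ gndB n := mem_gndB.2 ⟨hv, abs_le.2 hv'.1⟩
      refine ⟨⟨v, hm, rfl⟩, ?_⟩
      rw [ne_eq, negSet_fibB_self he hm, hv'.2]; exact hv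
  have h2 : (0 : ℤ) ∈ fixC n e := by simp [fixC, h0]
  rw [h1, Finset.card_image_of_injOn, Finset.card_erase_of_mem h2]
  · have := Finset.card_pos.2 ⟨_, h2⟩
    omega
  · intro v hv v' hv' h
    simp only [Finset.mem_coe, Finset.mem_erase, fixC, Finset.mem_filter, Finset.mem_Icc] at hv hv'
    have hm : v ∈ gndB n := mem_gndB.2 ⟨hv.1, abs_le.2 hv.2.1⟩
    have := (fibB_congr hm).1 h
    rwa [hv.2.2, hv'.2.2] at this

lemma code_le {n : ℕ} {e e' : ℤ → ℤ} (he : IsCode n e) (he' : IsCode n e')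
    (h : ∀ x ∈ gndB n, ∀ y ∈ gndB n, e x = e y → e' x = e' y) (x : ℤ) (hx : e x ≠ 0) :
    e' (e x) = e' x := by
  obtain ⟨h1, h2⟩ := code_mem he hx
  exact h _ h1 _ h2 (he.2.2.1 x)

lemma partB_inj {n : ℕ} {e e' : ℤ → ℤ} (he : IsCode n e) (he' : IsCode n e')
    (h : (partB n e he).blocks = (partB n e' he').blocks) : e = e' := by
  have key : ∀ {e e' : ℤ → ℤ} (he : IsCode n e) (he' : IsCode n e'),
      (partB n e he).blocks = (partB n e' he').blocks → ∀ x ∈ gndB n, ∀ y ∈ gndB n, e x = e y → e' x = e' y := by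
    intro e e' he he' h x hx y hy hxy
    have h1 : fibB n e x ∈ (partB n e' he').blocks := h ▸ Finset.mem_image_of_mem _ hx
    obtain ⟨z, hz, hzz⟩ := Finset.mem_image.1 h1
    have hx' : x ∈ fibB n e x := mem_fibB.2 ⟨mem_gndB.1 hx, rfl⟩
    have hy' : y ∈ fibB n e x := mem_fibB.2 ⟨mem_gndB.1 hy, hxy.symm⟩
    rw [← hzz, mem_fibB] at hx' hy'
    rw [hx'.2, hy'.2]
  have k1 := key he he' h
  have k2 := key he' he h.symm
  have z : ∀ {e e' : ℤ → ℤ} (he : IsCode n e) (he' : IsCode n e'),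
      (∀ x ∈ gndB n, ∀ y ∈ gndB n, e x = e y → e' x = e' y) → ∀ x, e x = 0 → e' x = 0 := by
    intro e e' he he' h x hx
    by_contra hne
    obtain ⟨_, hm⟩ := code_mem he' hne
    have hm' : -x ∈ gndB n := by
      rw [mem_gndB, abs_neg] at *
      exact ⟨by omega, hm.2⟩
    have := h x hm (-x) hm' (by rw [he.1]; omega)
    rw [he'.1] at this; omega
  funext x
  by_cases hx : e x = 0
  · rw [hx, z he he' k1 x hx]
  · have hx' : e' x ≠ 0 := fun h' => hx (z he' he k2 x h')
    have a1 := code_le he he' k1 x hx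
    have a2 := code_le he' he k2 x hx'
    have b1 := he'.2.2.2 (e x)
    have b2 := he.2.2.2 (e' x)
    rw [a1] at b1
    rw [a2] at b2
    rcases abs_eq_abs.1 (le_antisymm b2 b1) with h3 | h3
    · exact h3
    · rw [h3, he'.1, he'.2.2.1] at a1
      omega

lemma partB_surj {n : ℕ} (P : BPartition n) : ∃ e, ∃ he : IsCode n e, (partB n e he).blocks = P.blocks := by
  have ex : ∀ x : ℤ, ∃ v : ℤ, (x ∉ gndB n → v = 0) ∧ (x ∈ gndB n → ∃ C ∈ P.blocks, x ∈ C ∧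
      ((negSet C = C ∧ v = 0) ∨ (negSet C ≠ C ∧ v ∈ C ∧ ∀ y ∈ C, |v| ≤ |y|))) := by
    intro x
    by_cases hx : x ∈ gndB n
    · obtain ⟨C, hC, hxC⟩ := (P.cover x).1 (mem_gndB.1 hx)
      by_cases hz : negSet C = C
      · exact ⟨0, fun h => absurd hx h, fun _ => ⟨C, hC, hxC, Or.inl ⟨hz, rfl⟩⟩⟩
      · obtain ⟨v, hv, hmin⟩ := Finset.exists_min_image C (fun y => |y|) ⟨x, hxC⟩
        exact ⟨v, fun h => absurd hx h, fun _ => ⟨C, hC, hxC, Or.inr ⟨hz, hv, hmin⟩⟩⟩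
    · exact ⟨0, fun _ => rfl, fun h => absurd h hx⟩
  choose e e0 e1 using ex
  -- two blocks sharing an element are equal
  have same : ∀ C ∈ P.blocks, ∀ C' ∈ P.blocks, ∀ x, x ∈ C → x ∈ C' → C = C' := by
    intro C hC C' hC' x hx hx'
    by_contra hne
    exact Finset.disjoint_left.1 (P.disj C hC C' hC' hne) hx hx'
  have gnd : ∀ C ∈ P.blocks, ∀ x ∈ C, x ∈ gndB n := fun C hC x hx => mem_gndB.2 ((P.cover x).2 ⟨C, hC, hx⟩)
  have zb : ∀ C ∈ P.blocks, negSet C = C → ∀ x ∈ C, e x = 0 := by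
    intro C hC hz x hx
    obtain ⟨C', hC', hx', h | h⟩ := e1 x (gnd C hC x hx)
    · exact h.2
    · exact absurd (same C hC C' hC' x hx hx' ▸ hz) h.1
  have nzb : ∀ C ∈ P.blocks, negSet C ≠ C → ∀ x ∈ C, e x ∈ C ∧ ∀ y ∈ C, |e x| ≤ |y| := by
    intro C hC hz x hx
    obtain ⟨C', hC', hx', h | h⟩ := e1 x (gnd C hC x hx)
    · exact absurd (same C hC C' hC' x hx hx' ▸ h.1) hz
    · have := same C hC C' hC' x hx hx'
      subst this
      exact h.2
  have uniq : ∀ C ∈ P.blocks, negSet C ≠ C → ∀ a ∈ C, ∀ b ∈ C, |a| = |b| → a = b := by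
    intro C hC hz a ha b hb hab
    rcases abs_eq_abs.1 hab with h | h
    · exact h
    · exact absurd (same _ (P.closed C hC) C hC b (mem_negSet.2 (h ▸ ha)) hb) hz
  have const : ∀ C ∈ P.blocks, ∀ x ∈ C, ∀ y ∈ C, e x = e y := by
    intro C hC x hx y hy
    by_cases hz : negSet C = C
    · rw [zb C hC hz x hx, zb C hC hz y hy]
    · obtain ⟨a1, a2⟩ := nzb C hC hz x hx
      obtain ⟨b1, b2⟩ := nzb C hC hz y hy
      exact uniq C hC hz _ a1 _ b1 (le_antisymm (a2 _ b1) (b2 _ a1))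
  have nn : ∀ C, negSet (negSet C) = C := by
    intro C; ext x; simp [mem_negSet]
  have he : IsCode n e := by
    refine ⟨fun x => ?_, fun x hx => ?_, fun x => ?_, fun x => ?_⟩
    · by_cases hx : x ∈ gndB n
      · obtain ⟨C, hC, hxC⟩ := (P.cover x).1 (mem_gndB.1 hx)
        have hxn : -x ∈ negSet C := mem_negSet.2 (by simpa using hxC)
        by_cases hz : negSet C = C
        · rw [zb C hC hz x hxC, zb C hC hz (-x) (hz ▸ hxn)]; simp
        · have hz' : negSet (negSet C) ≠ negSet C := by rw [nn]; exact fun h => hz h.symm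
          obtain ⟨a1, a2⟩ := nzb C hC hz x hxC
          obtain ⟨b1, b2⟩ := nzb _ (P.closed C hC) hz' (-x) hxn
          have a1' : -e x ∈ negSet C := mem_negSet.2 (by simpa using a1)
          apply uniq _ (P.closed C hC) hz' _ b1 _ a1'
          apply le_antisymm (b2 _ a1')
          rw [abs_neg, ← abs_neg (e (-x))]
          exact a2 _ (mem_negSet.1 b1)
      · have hx' : -x ∉ gndB n := by
          intro h
          apply hx
          rw [mem_gndB, abs_neg] at *
          exact ⟨by omega, h.2⟩
        rw [e0 x hx, e0 _ hx']; simp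
    · apply e0
      rw [mem_gndB]; omega
    · by_cases hx : x ∈ gndB n
      · obtain ⟨C, hC, hxC⟩ := (P.cover x).1 (mem_gndB.1 hx)
        by_cases hz : negSet C = C
        · rw [zb C hC hz x hxC]; exact e0 0 (by simp [mem_gndB])
        · exact const C hC _ (nzb C hC hz x hxC).1 _ hxC
      · rw [e0 x hx]; exact e0 0 (by simp [mem_gndB])
    · by_cases hx : x ∈ gndB n
      · obtain ⟨C, hC, hxC⟩ := (P.cover x).1 (mem_gndB.1 hx)
        by_cases hz : negSet C = C
        · rw [zb C hC hz x hxC]; simp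
        · exact (nzb C hC hz x hxC).2 x hxC
      · rw [e0 x hx]; simp
  refine ⟨e, he, ?_⟩
  have fib : ∀ C ∈ P.blocks, ∀ x ∈ C, fibB n e x = C := by
    intro C hC x hx
    ext y
    rw [mem_fibB, ← mem_gndB]
    constructor
    · rintro ⟨hy, hxy⟩
      obtain ⟨C', hC', hyC'⟩ := (P.cover y).1 (mem_gndB.1 hy)
      have ne0 : ∀ D ∈ P.blocks, negSet D ≠ D → ∀ u ∈ D, e u ≠ 0 := by
        intro D hD hz u hu
        exact (mem_gndB.1 (gnd D hD _ (nzb D hD hz u hu).1)).1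
      by_cases hz : negSet C = C
      · by_cases hz' : negSet C' = C'
        · rw [P.zeroUnique C hC C' hC' hz hz']; exact hyC'
        · exact absurd (hxy.trans (zb C hC hz x hx)) (ne0 C' hC' hz' y hyC')
      · by_cases hz' : negSet C' = C'
        · exact absurd (hxy.symm.trans (zb C' hC' hz' y hyC')) (ne0 C hC hz x hx)
        · have a := (nzb C hC hz x hx).1
          have b := (nzb C' hC' hz' y hyC').1
          rw [hxy] at b
          rw [same C hC C' hC' _ a b]; exact hyC'
    · intro hy
      exact ⟨gnd C hC y hy, const C hC y hy x hx⟩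
  ext C
  simp only [partB, Finset.mem_image]
  constructor
  · rintro ⟨x, hx, rfl⟩
    obtain ⟨C, hC, hxC⟩ := (P.cover x).1 (mem_gndB.1 hx)
    rw [fib C hC x hxC]; exact hC
  · intro hC
    obtain ⟨x, hx⟩ := P.nonempty C hC
    exact ⟨x, gnd C hC x hx, fib C hC x hx⟩

lemma BPartition_ext {n : ℕ} {P Q : BPartition n} (h : P.blocks = Q.blocks) : P = Q := by
  cases P; cases Q; simp only at h; subst h; rfl

lemma SB_eq (n r : ℕ) : (SB n r : ℤ) = NC n r := by
  unfold NC SB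
  rw [Finset.sum_boole]
  rw [← Nat.subtype_card (p := fun e => IsCode n e ∧ (fixC n e).card = 2 * r + 1)
    ((codesF n).filter fun e => (fixC n e).card = 2 * r + 1) (by intro e; simp [mem_codesF])]
  norm_cast
  symm
  apply Nat.card_congr
  refine Equiv.ofBijective (fun e => ⟨partB n e.1 e.2.1, (partB_pairs e.2.1 r).2 e.2.2⟩) ⟨?_, ?_⟩
  · rintro ⟨e, he⟩ ⟨e', he'⟩ h
    simp only [Subtype.mk.injEq] at h
    apply Subtype.ext
    exact partB_inj he.1 he'.1 (by rw [h])
  · rintro ⟨P, hP⟩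
    obtain ⟨e, he, h⟩ := partB_surj P
    have h' : partB n e he = P := BPartition_ext h
    subst h'
    exact ⟨⟨e, he, (partB_pairs he r).1 hP⟩, rfl⟩

/-- `A_B(n,k) = Σ_{r=0}^{k} (−1)^{k−r} · 2^r · r! · S_B(n,r) · C(n−r, k−r)`. -/
theorem eulerian_stirling_typeB (n k : ℕ) (h : k ≤ n) :
    (EulB n k : ℤ) =
      ∑ r ∈ Finset.range (k + 1),
        (-1 : ℤ) ^ (k - r) * 2 ^ r * Nat.factorial r * SB n r * Nat.choose (n - r) (k - r) := by
  set c : ℕ → ℕ → ℤ := fun n r => 2 ^ r * Nat.factorial r * SB n r with hc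
  have key := algB (fun n k => (EulB n k : ℤ)) c
    (by simp [hc, SB_eq, NC_base])
    (by intro n r h; simp [hc, SB_eq, NC_gt n r h])
    (by intro n; simp [hc, SB_eq, NC_zero])
    (by
      intro n r
      simp only [hc, SB_eq, NC_succ, Nat.factorial_succ]
      push_cast
      ring)
    EulB_base EulB_zero EulB_succ n k
  rw [key]
  symm
  have hsub : Finset.range (k + 1) ⊆ Finset.range (n + 1) := Finset.range_subset_range.2 (by omega)
  rw [← Finset.sum_subset hsub]
  · apply Finset.sum_congr rfl
    intro r hr
    rw [Finset.mem_range] at hr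
    unfold coefB
    rw [if_pos (by omega)]
    simp only [hc]
    ring
  · intro r _ hr
    rw [Finset.mem_range] at hr
    unfold coefB
    rw [if_neg (by omega), mul_zero]
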